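/- L equals the set of all commutator elements of C, i.e. L = {m ∈ C : (0, m) ∈ ε(P′)}, where P′ is the two-sided ideal of P generated by all commutators [a,b] with a, b ∈ P. -/

import Mathlib

open MvPolynomial

namespace Stmt9

/-- Index type for `{1, …, 2d}`: `(i, 0)` stands for `2i-1` and `(i, 1)` for `2i`. -/
abbrev ι (d : ℕ) : Type := Fin d × Fin 2

/-- The free unital associative algebra `P = K⟨x_1, …, x_{2d}⟩`. -/
abbrev P (K : Type) [Field K] (d : ℕ) : Type := FreeAlgebra K (ι d)

/-- The polynomial ring `R = K[y_1, …, y_{2d}]`. -/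
abbrev R (K : Type) [Field K] (d : ℕ) : Type := MvPolynomial (ι d) K

/-- The polynomial ring `S = K[u_1, …, u_{2d}, v'_1, …, v'_{2d}]`; the variable
`X (Sum.inl j)` is `u_j` and `X (Sum.inr j)` is `v'_j`. -/
abbrev S (K : Type) [Field K] (d : ℕ) : Type := MvPolynomial (ι d ⊕ ι d) K

/-- The free `S`-module `M` with basis `a_1, …, a_{2d}`. -/
abbrev M (K : Type) [Field K] (d : ℕ) : Type := ι d → S K d

variable (K : Type) [Field K] (d : ℕ)

/-- The basis element `a_j` of `M`. -/
noncomputable def a (j : ι d) : M K d := Pi.single j 1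

/-- `y_j ↦ u_j`. -/
noncomputable def lam : R K d →ₐ[K] S K d :=
  MvPolynomial.rename (Sum.inl : ι d → ι d ⊕ ι d)

/-- `y_j ↦ v'_j`. -/
noncomputable def rho : R K d →ₐ[K] S K d :=
  MvPolynomial.rename (Sum.inr : ι d → ι d ⊕ ι d)

/-- The left `R`-action on `M`: `y_j` acts as scalar multiplication by `u_j`. -/
noncomputable instance : Module (R K d) (M K d) :=
  Module.compHom _ (lam K d).toRingHom

/-- The right `R`-action on `M`: `y_j` acts as scalar multiplication by `v'_j`. -/
noncomputable instance : Module (R K d)ᵐᵒᵖ (M K d) :=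
  Module.compHom _ (RingHom.fromOpposite (rho K d).toRingHom fun _ _ => mul_comm _ _)

instance : SMulCommClass (R K d) (R K d)ᵐᵒᵖ (M K d) := by
  constructor
  intro r r' m
  show lam K d r • (rho K d r'.unop • m) = rho K d r'.unop • (lam K d r • m)
  rw [smul_smul, smul_smul, mul_comm]

instance : IsScalarTower K (R K d) (M K d) := by
  constructor
  intro c r m
  show lam K d (c • r) • m = c • (lam K d r • m)
  rw [map_smul]
  exact smul_assoc c (lam K d r) m

instance : IsScalarTower K (R K d)ᵐᵒᵖ (M K d) := by
  constructor
  intro c r m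
  show rho K d (c • r).unop • m = c • (rho K d r.unop • m)
  rw [MulOpposite.unop_smul, map_smul]
  exact smul_assoc c (rho K d r.unop) m

/-- The wreath product `W = R ⋉ M`, the trivial square-zero extension of `R` by the
`R`-bimodule `M`. -/
noncomputable abbrev W : Type := TrivSqZeroExt (R K d) (M K d)

/-- The unique `K`-algebra homomorphism `ε : P → W` with `ε(x_j) = (y_j, a_j)`. -/
noncomputable def ε : P K d →ₐ[K] W K d :=
  FreeAlgebra.lift K fun j =>
    TrivSqZeroExt.inl (MvPolynomial.X j) + TrivSqZeroExt.inr (a K d j)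

/-- The commutator ideal `P'` of `P`: the two-sided ideal generated by all commutators
`[a,b] = ab - ba`. -/
noncomputable def P' : TwoSidedIdeal (P K d) :=
  TwoSidedIdeal.span {p : P K d | ∃ a b : P K d, p = a * b - b * a}

/-- `u_j ∈ S`. -/
noncomputable def u (j : ι d) : S K d := X (Sum.inl j)

/-- `v_j = v'_j - u_j ∈ S`. -/
noncomputable def v (j : ι d) : S K d := X (Sum.inr j) - X (Sum.inl j)

/-- `β_{pq} = v_{2p-1} v_{2q} - v_{2p} v_{2q-1}`. -/
noncomputable def β (p q : Fin d) : S K d :=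
  v K d (p, 0) * v K d (q, 1) - v K d (p, 1) * v K d (q, 0)

/-- `γ_{pq} = u_{2p-1} v_{2q} - u_{2p} v_{2q-1}`. -/
noncomputable def γ (p q : Fin d) : S K d :=
  u K d (p, 0) * v K d (q, 1) - u K d (p, 1) * v K d (q, 0)

/-- `w_{pq} = v_{2q}·a_{2p-1} - v_{2q-1}·a_{2p} ∈ M`. -/
noncomputable def w (p q : Fin d) : M K d :=
  v K d (q, 1) • a K d (p, 0) - v K d (q, 0) • a K d (p, 1)

/-- The algebra of constants `S^δ = ker δ_S`, as a `K`-subalgebra of `S`. -/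
noncomputable def Sδ (δS : Derivation K (S K d) (S K d)) : Subalgebra K (S K d) where
  carrier := {f | δS f = 0}
  mul_mem' := by
    intro p q hp hq
    simp only [Set.mem_setOf_eq] at hp hq ⊢
    rw [Derivation.leibniz, hp, hq, smul_zero, smul_zero, add_zero]
  add_mem' := by
    intro p q hp hq
    simp only [Set.mem_setOf_eq] at hp hq ⊢
    rw [map_add, hp, hq, add_zero]
  algebraMap_mem' := by
    intro c
    simp only [Set.mem_setOf_eq, Derivation.map_algebraMap]

/-- The generators `a_1, a_3, …, a_{2d-1}` and `w_{pq}` of the `S^δ`-submodule `C`. -/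
def genC : Set (M K d) :=
  (Set.range fun i : Fin d => a K d (i, 0)) ∪
    {m : M K d | ∃ p q : Fin d, m = w K d p q}

/-- The generators (9)–(16) of the `S^δ`-submodule `L`. -/
def genL : Set (M K d) :=
  {m | ∃ i : Fin d, m = w K d i i} ∪
    {m | ∃ i j : Fin d, i < j ∧ m = w K d i j + w K d j i} ∪
    {m | ∃ i j : Fin d, i < j ∧
      m = v K d (j, 0) • a K d (i, 0) - v K d (i, 0) • a K d (j, 0)} ∪
    {m | ∃ i p q : Fin d, p < q ∧
      m = β K d p q • a K d (i, 0) - v K d (i, 0) • w K d p q} ∪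
    {m | ∃ i j p q : Fin d, i < j ∧ p < q ∧
      m = β K d p q • w K d i j - β K d i j • w K d p q} ∪
    {m | ∃ i j k : Fin d, i < j ∧ j < k ∧
      m = β K d j k • a K d (i, 0) - β K d i k • a K d (j, 0)
        + β K d i j • a K d (k, 0)} ∪
    {m | ∃ i j k l : Fin d, j < k ∧ k < l ∧
      m = γ K d i j • w K d k l - γ K d i k • w K d j l + γ K d i l • w K d j k} ∪
    {m | ∃ i j k : Fin d, j < k ∧
      m = u K d (i, 0) • w K d j k - γ K d i k • a K d (j, 0)
        + γ K d i j • a K d (k, 0)}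

section Gen

/-- Bracket `[p.1, p.2]` of the vectors `(0,-1), (x_1,y_1), …`. -/
def br {A : Type} [CommRing A] {n : ℕ} (x y : Fin n → A) (p : Fin (n+1) × Fin (n+1)) : A :=
  (Fin.cons 0 x : Fin (n+1) → A) p.1 * (Fin.cons (-1) y : Fin (n+1) → A) p.2
    - (Fin.cons (-1) y : Fin (n+1) → A) p.1 * (Fin.cons 0 x : Fin (n+1) → A) p.2

/-- Product of brackets. -/
def mu {A : Type} [CommRing A] {n : ℕ} (x y : Fin n → A)
    (s : Multiset (Fin (n+1) × Fin (n+1))) : A := (s.map (br x y)).prod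

/-- All pairs are increasing. -/
def Good {n : ℕ} (s : Multiset (Fin (n+1) × Fin (n+1))) : Prop := ∀ p ∈ s, p.1 < p.2

/-- The multiset is a chain. -/
def Std {n : ℕ} (s : Multiset (Fin (n+1) × Fin (n+1))) : Prop :=
  ∀ p ∈ s, ∀ q ∈ s, p ≤ q ∨ q ≤ p

/-- Termination measure. -/
def meas {n : ℕ} (s : Multiset (Fin (n+1) × Fin (n+1))) : ℕ :=
  (s.map fun p => ((p.2 : ℕ) - (p.1 : ℕ))^2).sum

theorem br_plucker {A : Type} [CommRing A] {n : ℕ} (x y : Fin n → A) (a b c d : Fin (n+1)) :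
    br x y (a,b) * br x y (c,d) = br x y (a,d) * br x y (c,b) - br x y (a,c) * br x y (d,b) := by
  simp only [br]; ring

theorem br_map {A B : Type} [CommRing A] [CommRing B] {n : ℕ} (f : A →+* B) (x y : Fin n → A)
    (p : Fin (n+1) × Fin (n+1)) : f (br x y p) = br (fun i => f (x i)) (fun i => f (y i)) p := by
  have h1 : ∀ i, f ((Fin.cons 0 x : Fin (n+1) → A) i)
      = (Fin.cons 0 (fun i => f (x i)) : Fin (n+1) → B) i := by
    intro i; refine Fin.cases ?_ (fun j => ?_) i <;> simp
  have h2 : ∀ i, f ((Fin.cons (-1) y : Fin (n+1) → A) i)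
      = (Fin.cons (-1) (fun i => f (y i)) : Fin (n+1) → B) i := by
    intro i; refine Fin.cases ?_ (fun j => ?_) i <;> simp
  simp only [br, map_sub, map_mul, h1, h2]

theorem mu_map {A B : Type} [CommRing A] [CommRing B] {n : ℕ} (f : A →+* B) (x y : Fin n → A)
    (s : Multiset (Fin (n+1) × Fin (n+1))) :
    f (mu x y s) = mu (fun i => f (x i)) (fun i => f (y i)) s := by
  simp only [mu, map_multiset_prod, Multiset.map_map, Function.comp_def, br_map]

theorem straighten {k V : Type} {n : ℕ} [Ring k] [AddCommGroup V] [Module k V]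
    (E : Multiset (Fin (n+1) × Fin (n+1)) → V)
    (Pd : Multiset (Fin (n+1) × Fin (n+1)) → Prop)
    (hP : ∀ a b c d t, a < c → c < d → d < b → Pd ((a,b) ::ₘ (c,d) ::ₘ t) →
      Pd ((a,d) ::ₘ (c,b) ::ₘ t) ∧ Pd ((a,c) ::ₘ (d,b) ::ₘ t))
    (hE : ∀ a b c d t, a < c → c < d → d < b → Pd ((a,b) ::ₘ (c,d) ::ₘ t) →
      E ((a,b) ::ₘ (c,d) ::ₘ t) = E ((a,d) ::ₘ (c,b) ::ₘ t) - E ((a,c) ::ₘ (d,b) ::ₘ t))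
    (X : Submodule k V) (hX : ∀ s, Good s → Std s → Pd s → E s ∈ X) :
    ∀ s, Good s → Pd s → E s ∈ X := by
  intro s
  induction hm : meas s using Nat.strong_induction_on generalizing s with
  | _ N ih =>
  intro hg hp
  by_cases hs : Std s
  · exact hX s hg hs hp
  have key : ∃ p ∈ s, ∃ q ∈ s, p.1 < q.1 ∧ q.2 < p.2 := by
    simp only [Std] at hs
    push Not at hs
    obtain ⟨p, hp, q, hq, h1, h2⟩ := hs
    simp only [Prod.le_def, not_and_or, not_le] at h1 h2
    rcases h1 with h1 | h1 <;> rcases h2 with h2 | h2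
    · exact absurd h1 (lt_asymm h2)
    · exact ⟨q, hq, p, hp, h1, h2⟩
    · exact ⟨p, hp, q, hq, h2, h1⟩
    · exact absurd h1 (lt_asymm h2)
  obtain ⟨⟨a, b⟩, hp1, ⟨c, d⟩, hq1, h1, h2⟩ := key
  simp only at h1 h2
  obtain ⟨t', rfl⟩ := Multiset.exists_cons_of_mem hp1
  have hne : (c,d) ≠ (a,b) := by rintro h; simp only [Prod.mk.injEq] at h; omega
  obtain ⟨t, rfl⟩ := Multiset.exists_cons_of_mem ((Multiset.mem_cons.1 hq1).resolve_left hne)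
  have hcd : c < d := hg (c,d) hq1
  have hgt : ∀ p ∈ t, p.1 < p.2 := fun p hp => hg p (by simp [hp])
  rw [hE a b c d t h1 hcd h2 hp]
  obtain ⟨hA, hB⟩ := hP a b c d t h1 hcd h2 hp
  simp only [Fin.lt_def] at h1 h2 hcd
  have g1 : Good ((a,d) ::ₘ (c,b) ::ₘ t) := by
    intro p hp
    simp only [Multiset.mem_cons] at hp
    rcases hp with rfl | rfl | hp
    · simp only [Fin.lt_def]; omega
    · simp only [Fin.lt_def]; omega
    · exact hgt p hp
  have g2 : Good ((a,c) ::ₘ (d,b) ::ₘ t) := by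
    intro p hp
    simp only [Multiset.mem_cons] at hp
    rcases hp with rfl | rfl | hp
    · simp only [Fin.lt_def]; omega
    · simp only [Fin.lt_def]; omega
    · exact hgt p hp
  obtain ⟨i, hi⟩ := Nat.exists_eq_add_of_lt h1
  obtain ⟨j, hj⟩ := Nat.exists_eq_add_of_lt hcd
  obtain ⟨l, hl⟩ := Nat.exists_eq_add_of_lt h2
  refine X.sub_mem (ih _ ?_ _ rfl g1 hA) (ih _ ?_ _ rfl g2 hB)
  · rw [← hm]; simp only [meas, Multiset.map_cons, Multiset.sum_cons]
    have e1 : (b : ℕ) - a = i + 1 + (j + 1) + (l + 1) := by omega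
    have e2 : (d : ℕ) - c = j + 1 := by omega
    have e3 : (d : ℕ) - a = i + 1 + (j + 1) := by omega
    have e4 : (b : ℕ) - c = j + 1 + (l + 1) := by omega
    rw [e1, e2, e3, e4]; nlinarith [Nat.zero_le (i*l)]
  · rw [← hm]; simp only [meas, Multiset.map_cons, Multiset.sum_cons]
    have e1 : (b : ℕ) - a = i + 1 + (j + 1) + (l + 1) := by omega
    have e2 : (d : ℕ) - c = j + 1 := by omega
    have e3 : (c : ℕ) - a = i + 1 := by omega
    have e4 : (b : ℕ) - d = l + 1 := by omega
    rw [e1, e2, e3, e4]; nlinarith [Nat.zero_le (i*l), Nat.zero_le (i*j), Nat.zero_le (j*l)]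

theorem std_min {n : ℕ} (s : Multiset (Fin (n+1) × Fin (n+1))) (hs : Std s) (h0 : s ≠ 0) :
    ∃ p ∈ s, ∀ q ∈ s, p ≤ q := by
  obtain ⟨p, hp, hmin⟩ := Finset.exists_min_image s.toFinset
    (fun p => (p.1 : ℕ) + (p.2 : ℕ)) (by simpa [Finset.nonempty_iff_ne_empty] using h0)
  simp only [Multiset.mem_toFinset] at hp hmin
  refine ⟨p, hp, fun q hq => ?_⟩
  rcases hs p hp q hq with h | h
  · exact h
  · have := hmin q hq
    simp only [Prod.le_def, Fin.le_def] at h ⊢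
    omega

theorem std_inj {n : ℕ} (s : Multiset (Fin (n+1) × Fin (n+1))) :
    ∀ t, Std s → Std t → s.map Prod.fst = t.map Prod.fst →
    s.map Prod.snd = t.map Prod.snd → s = t := by
  induction hc : s.card generalizing s with
  | zero =>
    intro t _ _ h1 _
    rw [Multiset.card_eq_zero] at hc
    subst hc
    simpa [eq_comm] using h1
  | succ N ih =>
    intro t hs ht h1 h2
    have hs0 : s ≠ 0 := by rintro rfl; simp at hc
    have ht0 : t ≠ 0 := by
      rintro rfl; simp at h1; exact hs0 h1
    obtain ⟨p, hp, hpm⟩ := std_min s hs hs0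
    obtain ⟨q, hq, hqm⟩ := std_min t ht ht0
    have hpq : p = q := by
      have a1 : p.1 ∈ t.map Prod.fst := h1 ▸ Multiset.mem_map_of_mem _ hp
      have a2 : p.2 ∈ t.map Prod.snd := h2 ▸ Multiset.mem_map_of_mem _ hp
      have a3 : q.1 ∈ s.map Prod.fst := h1 ▸ Multiset.mem_map_of_mem _ hq
      have a4 : q.2 ∈ s.map Prod.snd := h2 ▸ Multiset.mem_map_of_mem _ hq
      rw [Multiset.mem_map] at a1 a2 a3 a4
      obtain ⟨r1, m1, e1⟩ := a1
      obtain ⟨r2, m2, e2⟩ := a2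
      obtain ⟨r3, m3, e3⟩ := a3
      obtain ⟨r4, m4, e4⟩ := a4
      apply Prod.ext
      · exact le_antisymm (e3 ▸ (hpm _ m3).1) (e1 ▸ (hqm _ m1).1)
      · exact le_antisymm (e4 ▸ (hpm _ m4).2) (e2 ▸ (hqm _ m2).2)
    subst hpq
    obtain ⟨s', rfl⟩ := Multiset.exists_cons_of_mem hp
    obtain ⟨t', rfl⟩ := Multiset.exists_cons_of_mem hq
    simp only [Multiset.map_cons, Multiset.cons_inj_right] at h1 h2
    rw [ih s' (by simpa using hc) t' (fun a ha b hb => hs a (by simp [ha]) b (by simp [hb]))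
      (fun a ha b hb => ht a (by simp [ha]) b (by simp [hb])) h1 h2]

end Gen

section Ind

/-- Auxiliary polynomial ring, `y`-variables first. -/
abbrev TT (k : Type) [Field k] (n : ℕ) : Type := MvPolynomial (Fin n ⊕ₗ Fin n) k

/-- `x_i` -/
noncomputable def tX (k : Type) [Field k] {n : ℕ} (i : Fin n) : TT k n := X (Sum.inrₗ i)
/-- `y_i` -/
noncomputable def tY (k : Type) [Field k] {n : ℕ} (i : Fin n) : TT k n := X (Sum.inlₗ i)

/-- Leading exponent of a bracket. -/
noncomputable def ex {n : ℕ} (p : Fin (n+1) × Fin (n+1)) : (Fin n ⊕ₗ Fin n) →₀ ℕ :=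
  (Fin.cons 0 (fun i => Finsupp.single (Sum.inlₗ i) 1) : Fin (n+1) → _) p.1 +
  (Fin.cons 0 (fun i => Finsupp.single (Sum.inrₗ i) 1) : Fin (n+1) → _) p.2

theorem ex_inr {n : ℕ} (s : Multiset (Fin (n+1) × Fin (n+1))) (i : Fin n) :
    (s.map ex).sum (Sum.inrₗ i) = (s.map Prod.snd).count i.succ := by
  induction s using Multiset.induction with
  | empty => simp
  | cons p s ih =>
    obtain ⟨a, b⟩ := p
    simp only [Multiset.map_cons, Multiset.sum_cons, Finsupp.add_apply, ih, ex,
      Multiset.count_cons]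
    rw [add_comm]
    congr 1
    refine Fin.cases ?_ (fun a => ?_) a <;> refine Fin.cases ?_ (fun b => ?_) b <;>
      simp [Finsupp.single_apply, Fin.succ_ne_zero, eq_comm, Sum.inlₗ, Sum.inrₗ]

theorem ex_inl {n : ℕ} (s : Multiset (Fin (n+1) × Fin (n+1))) (i : Fin n) :
    (s.map ex).sum (Sum.inlₗ i) = (s.map Prod.fst).count i.succ := by
  induction s using Multiset.induction with
  | empty => simp
  | cons p s ih =>
    obtain ⟨a, b⟩ := p
    simp only [Multiset.map_cons, Multiset.sum_cons, Finsupp.add_apply, ih, ex,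
      Multiset.count_cons]
    rw [add_comm]
    congr 1
    refine Fin.cases ?_ (fun a => ?_) a <;> refine Fin.cases ?_ (fun b => ?_) b <;>
      simp [Finsupp.single_apply, Fin.succ_ne_zero, eq_comm, Sum.inlₗ, Sum.inrₗ]

theorem ex_inj {n : ℕ} (s t : Multiset (Fin (n+1) × Fin (n+1))) (hs : Std s) (ht : Std t)
    (gs : Good s) (gt : Good t) (h : (s.map ex).sum = (t.map ex).sum) : s = t := by
  have h2 : s.map Prod.snd = t.map Prod.snd := by
    ext i
    refine Fin.cases ?_ (fun i => ?_) i
    · rw [Multiset.count_eq_zero_of_notMem, Multiset.count_eq_zero_of_notMem]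
      · intro hm
        obtain ⟨p, hp, e⟩ := Multiset.mem_map.1 hm
        have := gt p hp
        rw [e] at this; exact absurd this (Fin.not_lt_zero _)
      · intro hm
        obtain ⟨p, hp, e⟩ := Multiset.mem_map.1 hm
        have := gs p hp
        rw [e] at this; exact absurd this (Fin.not_lt_zero _)
    · rw [← ex_inr, ← ex_inr, h]
  have h1' : ∀ i : Fin n, (s.map Prod.fst).count i.succ = (t.map Prod.fst).count i.succ := by
    intro i; rw [← ex_inl, ← ex_inl, h]
  have hcard : (s.map Prod.fst).card = (t.map Prod.fst).card := by
    have := congrArg Multiset.card h2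
    simpa using this
  refine std_inj s t hs ht ?_ h2
  ext i
  refine Fin.cases ?_ h1' i
  rw [← Multiset.sum_count_eq_card (s := Finset.univ) (by simp),
    ← Multiset.sum_count_eq_card (s := Finset.univ) (by simp), Fin.sum_univ_succ,
    Fin.sum_univ_succ, Finset.sum_congr rfl (fun i _ => h1' i)] at hcard
  omega

theorem deg_prod {k : Type} [Field k] {n : ℕ} (f : Fin (n+1) × Fin (n+1) → TT k n)
    (s : Multiset (Fin (n+1) × Fin (n+1)))
    (hf : ∀ p ∈ s, f p ≠ 0 ∧ MonomialOrder.lex.degree (f p) = ex p) :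
    (s.map f).prod ≠ 0 ∧ MonomialOrder.lex.degree (s.map f).prod = (s.map ex).sum := by
  induction s using Multiset.induction with
  | empty => simp
  | cons p s ih =>
    obtain ⟨h1, h2⟩ := ih fun p hp => hf p (by simp [hp])
    obtain ⟨h3, h4⟩ := hf p (by simp)
    simp only [Multiset.map_cons, Multiset.prod_cons, Multiset.sum_cons]
    exact ⟨mul_ne_zero h3 h1, by rw [MonomialOrder.degree_mul h3 h1, h2, h4]⟩

theorem indep {k : Type} [Field k] {n : ℕ} (f : Fin (n+1) × Fin (n+1) → TT k n)
    (c : Multiset (Fin (n+1) × Fin (n+1)) →₀ k)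
    (hc : ∀ s ∈ c.support, Good s ∧ Std s ∧
      ∀ p ∈ s, f p ≠ 0 ∧ MonomialOrder.lex.degree (f p) = ex p)
    (h0 : c.sum (fun s r => r • (s.map f).prod) = 0) : c = 0 := by
  by_contra hne
  obtain ⟨s, hs, hmax⟩ := Finset.exists_max_image c.support
    (fun s => MonomialOrder.lex.toSyn (s.map ex).sum) (Finsupp.support_nonempty_iff.2 hne)
  have h1 := congrArg (MvPolynomial.coeff (s.map ex).sum) h0
  rw [Finsupp.sum, MvPolynomial.coeff_sum, Finset.sum_eq_single s] at h1
  · obtain ⟨h2, h3⟩ := deg_prod f s (hc s hs).2.2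
    rw [MvPolynomial.coeff_smul, ← h3, MvPolynomial.coeff_zero, smul_eq_mul] at h1
    rcases mul_eq_zero.1 h1 with h | h
    · exact (Finsupp.mem_support_iff.1 hs) h
    · exact MonomialOrder.coeff_degree_ne_zero_iff.2 h2 h
  · intro t ht hts
    rw [MvPolynomial.coeff_smul, MonomialOrder.coeff_eq_zero_of_lt (m := MonomialOrder.lex),
      smul_zero]
    rw [(deg_prod f t (hc t ht).2.2).2]
    refine lt_of_le_of_ne (hmax t ht) fun h => hts ?_
    exact ex_inj t s (hc t ht).2.1 (hc s hs).2.1 (hc t ht).1 (hc s hs).1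
      (MonomialOrder.lex.toSyn.injective h)
  · intro h; exact absurd hs h

theorem deg_br {k : Type} [Field k] {n : ℕ} (x : Fin n → TT k n)
    (p : Fin (n+1) × Fin (n+1)) (hp : p.1 < p.2)
    (hx : ∀ i, x i = tX k i ∨ x i = 0)
    (hx2 : ∀ i, p.2 = Fin.succ i → x i = tX k i) :
    br x (tY k) p ≠ 0 ∧ MonomialOrder.lex.degree (br x (tY k) p) = ex p := by
  obtain ⟨a, b⟩ := p
  revert hp hx2
  refine Fin.cases (by simp) (fun b => ?_) b
  refine Fin.cases ?_ (fun a => ?_) a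
  · intro _ hx2
    have : br x (tY k) (0, b.succ) = tX k b := by simp [br, hx2 b rfl]
    rw [this]
    simp [ex, tX, MonomialOrder.degree_X]
  · intro hab hx2
    simp only [Fin.succ_lt_succ_iff] at hab
    have : br x (tY k) (a.succ, b.succ) = -(tY k a * tX k b) + x a * tY k b := by
      simp [br, hx2 b rfl]; ring
    rw [this]
    have hA : (tY k a * tX k b) ≠ 0 := by simp [tX, tY]
    have hB : (tX k a * tY k b) ≠ 0 := by simp [tX, tY]
    have dA : MonomialOrder.lex.degree (tY k a * tX k b) = ex (a.succ, b.succ) := by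
      rw [MonomialOrder.degree_mul (by simp [tY]) (by simp [tX])]
      simp [ex, tX, tY, MonomialOrder.degree_X]
    rcases hx a with h | h
    · have hlt : MonomialOrder.lex.toSyn (MonomialOrder.lex.degree (x a * tY k b)) <
          MonomialOrder.lex.toSyn (MonomialOrder.lex.degree (-(tY k a * tX k b))) := by
        rw [MonomialOrder.degree_neg, dA, h, MonomialOrder.degree_mul (by simp [tX]) (by simp [tY])]
        simp only [ex, tX, tY, MonomialOrder.degree_X, Fin.cons_succ]
        rw [MonomialOrder.lex_lt_iff, Finsupp.Lex.lt_iff]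
        refine ⟨Sum.inlₗ a, ?_, ?_⟩
        · intro j hj
          have h1 : j ≠ Sum.inlₗ a := ne_of_lt hj
          have h2 : j ≠ Sum.inlₗ b := ne_of_lt (hj.trans (by simpa using hab))
          have h3 : ∀ c, j ≠ Sum.inrₗ c := fun c => ne_of_lt (hj.trans (by simp))
          simp [h1.symm, h2.symm, (h3 _).symm]
        · have : b ≠ a := hab.ne'
          simp [Sum.inlₗ, Sum.inrₗ, this]
      have := MonomialOrder.degree_add_of_lt hlt
      rw [MonomialOrder.degree_neg, dA] at this
      refine ⟨fun h0 => ?_, this⟩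
      rw [h0] at this
      have h2 := congrArg (fun e => e (Sum.inlₗ a)) this
      simp [ex, Sum.inlₗ, Sum.inrₗ] at h2
    · rw [h, zero_mul, add_zero, MonomialOrder.degree_neg]
      exact ⟨neg_ne_zero.2 hA, dA⟩

end Ind

section FFT

/-- Subalgebra generated by brackets. -/
noncomputable def AA (k : Type) [Field k] (n : ℕ) : Subalgebra k (TT k n) :=
  Algebra.adjoin k {f | ∃ p : Fin (n+1) × Fin (n+1), p.1 < p.2 ∧ f = br (tX k) (tY k) p}

theorem mu_cons {A : Type} [CommRing A] {n : ℕ} (x y : Fin n → A) (p)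
    (s : Multiset (Fin (n+1) × Fin (n+1))) : mu x y (p ::ₘ s) = br x y p * mu x y s := by
  simp [mu]

theorem AA_span_good {k : Type} [Field k] {n : ℕ} (f : TT k n) (hf : f ∈ AA k n) :
    f ∈ Submodule.span k (mu (tX k) (tY k) '' {s | Good s}) := by
  have : f ∈ Subalgebra.toSubmodule (AA k n) := hf
  rw [AA, Algebra.adjoin_eq_span] at this
  refine Submodule.span_mono ?_ this
  intro g hg
  induction hg using Submonoid.closure_induction with
  | mem x hx =>
    obtain ⟨p, hp, rfl⟩ := hx
    exact ⟨{p}, by intro q hq; rw [Multiset.mem_singleton] at hq; rwa [hq], by simp [mu]⟩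
  | one => exact ⟨0, by intro q hq; simp at hq, by simp [mu]⟩
  | mul x y _ _ hx hy =>
    obtain ⟨s, hs, rfl⟩ := hx
    obtain ⟨t, ht, rfl⟩ := hy
    refine ⟨s + t, ?_, by simp [mu]⟩
    intro p hp
    rcases Multiset.mem_add.1 hp with h | h
    · exact hs p h
    · exact ht p h

theorem AA_span_std {k : Type} [Field k] {n : ℕ} (f : TT k n) (hf : f ∈ AA k n) :
    f ∈ Submodule.span k (mu (tX k) (tY k) '' {s | Good s ∧ Std s}) := by
  have := AA_span_good f hf
  refine (Submodule.span_le.2 ?_) this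
  rintro _ ⟨s, hs, rfl⟩
  refine straighten (mu (tX k) (tY k)) (fun _ => True) (by simp) ?_ _ ?_ s hs trivial
  · intro a b c d t _ _ _ _
    simp only [mu_cons, ← mul_assoc]
    rw [br_plucker, sub_mul]
  · intro s h1 h2 _
    exact Submodule.subset_span ⟨s, ⟨h1, h2⟩, rfl⟩

theorem br_mem {k : Type} [Field k] {n : ℕ} (p : Fin (n+1) × Fin (n+1)) (hp : p.1 < p.2) :
    br (tX k) (tY k) p ∈ AA k n := Algebra.subset_adjoin ⟨p, hp, rfl⟩

theorem mu_mem {k : Type} [Field k] {n : ℕ} (s : Multiset (Fin (n+1) × Fin (n+1)))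
    (hs : Good s) : mu (tX k) (tY k) s ∈ AA k n := by
  refine Subalgebra.multiset_prod_mem _ ?_
  intro f hf
  obtain ⟨p, hp, rfl⟩ := Multiset.mem_map.1 hf
  exact br_mem p (hs p hp)

theorem br_zero_succ {A : Type} [CommRing A] {n : ℕ} (x y : Fin n → A) (i : Fin n) :
    br x y (0, i.succ) = x i := by simp [br]

theorem AA_div {k : Type} [Field k] {n : ℕ} (i0 : Fin n) (h0 : ∀ i, i0 ≤ i)
    (f : TT k n) (hf : tX k i0 * f ∈ AA k n) : f ∈ AA k n := by
  classical
  have h1 := AA_span_std _ hf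
  rw [Finsupp.mem_span_image_iff_linearCombination] at h1
  obtain ⟨c, hc, hcf⟩ := h1
  have hc' : ∀ s ∈ c.support, Good s ∧ Std s := fun s hs => (Finsupp.mem_supported _ _).1 hc hs
  let p0 : Fin (n+1) × Fin (n+1) := (0, i0.succ)
  let π : TT k n →ₐ[k] TT k n := aeval (fun v => if v = Sum.inrₗ i0 then 0 else X v)
  have πY : ∀ i, π (tY k i) = tY k i := by
    intro i; simp [π, tY, Sum.inlₗ, Sum.inrₗ]
  have πX : ∀ i, π (tX k i) = if i = i0 then 0 else tX k i := by
    intro i; simp [π, tX, Sum.inrₗ]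
  have πmu : ∀ s, π (mu (tX k) (tY k) s) = (s.map (br (fun i => π (tX k i)) (tY k))).prod := by
    intro s
    have := mu_map (π : TT k n →+* TT k n) (tX k) (tY k) s
    simpa [πY, mu] using this
  have hz : c.filter (fun s => p0 ∉ s) = 0 := by
    refine indep (br (fun i => π (tX k i)) (tY k)) _ ?_ ?_
    · intro s hs
      rw [Finsupp.support_filter, Finset.mem_filter] at hs
      obtain ⟨hg, hstd⟩ := hc' s hs.1
      refine ⟨hg, hstd, fun p hp => deg_br _ p (hg p hp) ?_ ?_⟩
      · intro i; rw [πX]; split_ifs <;> simp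
      · intro i hi
        rw [πX, if_neg]
        rintro rfl
        apply hs.2
        have h2 := hg p hp
        have h3 : (i : ℕ) = 0 := by
          have := h0 ⟨0, lt_of_le_of_lt (Nat.zero_le _) i.2⟩
          simpa [Fin.le_def] using this
        have : p = p0 := by
          apply Prod.ext
          · rw [hi, Fin.lt_def, Fin.val_succ, h3] at h2
            apply Fin.ext
            simpa [p0] using h2
          · exact hi
        rwa [← this]
    · have h2 : π (tX k i0 * f) = 0 := by rw [map_mul, πX, if_pos rfl, zero_mul]
      rw [← hcf, Finsupp.linearCombination_apply, Finsupp.sum, map_sum] at h2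
      rw [Finsupp.sum, Finsupp.support_filter, Finset.sum_filter]
      refine Eq.trans ?_ h2
      refine Finset.sum_congr rfl fun s hs => ?_
      rw [map_smul, πmu]
      split_ifs with h
      · obtain ⟨t, rfl⟩ := Multiset.exists_cons_of_mem h
        rw [Multiset.map_cons, Multiset.prod_cons, br_zero_succ, πX, if_pos rfl, zero_mul,
          smul_zero]
      · rw [Finsupp.filter_apply_pos (fun s => p0 ∉ s) _ h]
  have hmem : ∀ s ∈ c.support, p0 ∈ s := by
    intro s hs
    by_contra h
    have := DFunLike.congr_fun hz s
    rw [Finsupp.filter_apply_pos (fun s => p0 ∉ s) _ h] at this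
    exact (Finsupp.mem_support_iff.1 hs) this
  have : f = ∑ s ∈ c.support, c s • mu (tX k) (tY k) (s.erase p0) := by
    have hX : tX k i0 ≠ 0 := by simp [tX]
    apply mul_left_cancel₀ hX
    rw [← hcf, Finsupp.linearCombination_apply, Finsupp.sum, Finset.mul_sum]
    refine Finset.sum_congr rfl fun s hs => ?_
    have e : mu (tX k) (tY k) s = tX k i0 * mu (tX k) (tY k) (s.erase p0) := by
      conv_lhs => rw [← Multiset.cons_erase (hmem s hs), mu_cons, br_zero_succ]
    rw [e, mul_smul_comm]
  rw [this]
  refine Subalgebra.sum_mem _ fun s hs => Subalgebra.smul_mem _ (mu_mem _ ?_) _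
  intro p hp
  exact (hc' s hs).1 p (Multiset.mem_of_mem_erase hp)

/-- The derivation on the auxiliary ring. -/
noncomputable def DD (k : Type) [Field k] (n : ℕ) : Derivation k (TT k n) (TT k n) :=
  MvPolynomial.mkDerivation k (fun v => Sum.elim (fun i => tX k i) (fun _ => 0) (ofLex v))

theorem DD_X {k : Type} [Field k] {n : ℕ} (i : Fin n) : DD k n (tX k i) = 0 := by
  simp [DD, tX, mkDerivation_X, Sum.inrₗ]
theorem DD_Y {k : Type} [Field k] {n : ℕ} (i : Fin n) : DD k n (tY k i) = tX k i := by
  simp [DD, tY, mkDerivation_X, Sum.inlₗ]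

theorem DD_br {k : Type} [Field k] {n : ℕ} (p : Fin (n+1) × Fin (n+1)) :
    DD k n (br (tX k) (tY k) p) = 0 := by
  obtain ⟨a, b⟩ := p
  refine Fin.cases ?_ (fun a => ?_) a <;> refine Fin.cases ?_ (fun b => ?_) b <;>
    simp [br, DD_X, DD_Y, Derivation.leibniz]
  ring

theorem DD_AA {k : Type} [Field k] {n : ℕ} (f : TT k n) (hf : f ∈ AA k n) : DD k n f = 0 := by
  induction hf using Algebra.adjoin_induction with
  | mem x hx => obtain ⟨p, _, rfl⟩ := hx; exact DD_br p
  | algebraMap r => simp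
  | add x y _ _ hx hy => rw [map_add, hx, hy, add_zero]
  | mul x y _ _ hx hy => rw [Derivation.leibniz, hx, hy]; simp

theorem DD_aeval {k : Type} [Field k] {n : ℕ} (y : TT k n) (p : Polynomial (AA k n)) :
    DD k n (Polynomial.aeval y p) = Polynomial.aeval y p.derivative * DD k n y := by
  induction p using Polynomial.induction_on' with
  | add p q hp hq => simp only [map_add, hp, hq, add_mul]
  | monomial m c =>
    simp only [Polynomial.aeval_monomial, Polynomial.derivative_monomial, Derivation.leibniz,
      Derivation.leibniz_pow, map_mul, map_natCast, smul_eq_mul, nsmul_eq_mul]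
    have : DD k n (algebraMap (AA k n) (TT k n) c) = 0 := DD_AA _ c.2
    rw [this]; ring

theorem trans_aux {k : Type} [Field k] [CharZero k] {n : ℕ} (i0 : Fin n)
    (p : Polynomial (AA k n)) (hp : Polynomial.aeval (tY k i0) p = 0) : p = 0 := by
  induction hN : p.natDegree using Nat.strong_induction_on generalizing p with
  | _ N ih =>
  have h1 := DD_aeval (tY k i0) p
  rw [hp, map_zero, DD_Y, eq_comm, mul_eq_zero] at h1
  have h2 := h1.resolve_right (by simp [tX])
  have h3 : p.natDegree = 0 := by
    by_contra hne
    have := ih _ (by rw [← hN]; exact Polynomial.natDegree_derivative_lt hne) _ h2 rfl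
    exact hne (Polynomial.derivative_eq_zero.1 this)
  rw [Polynomial.eq_C_of_natDegree_eq_zero h3] at hp ⊢
  rw [Polynomial.aeval_C] at hp
  have : p.coeff 0 = 0 := Subtype.ext hp
  rw [this, map_zero]

theorem loc_aux {k : Type} [Field k] {n : ℕ} (i0 : Fin n) (h0 : ∀ i, i0 ≤ i) (f : TT k n) :
    ∃ N : ℕ, tX k i0 ^ N * f ∈ (Polynomial.aeval (R := AA k n) (tY k i0)).range := by
  have hA : ∀ g ∈ AA k n, g ∈ (Polynomial.aeval (R := AA k n) (tY k i0)).range := fun g hg =>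
    ⟨Polynomial.C ⟨g, hg⟩, by simp [Polynomial.aeval_C]⟩
  have hX : ∀ i, tX k i ∈ AA k n := fun i => by
    rw [← br_zero_succ (tX k) (tY k)]; exact br_mem _ (by simp)
  have hY : tY k i0 ∈ (Polynomial.aeval (R := AA k n) (tY k i0)).range := ⟨Polynomial.X, by simp⟩
  induction f using MvPolynomial.induction_on with
  | C r => exact ⟨0, by simpa using hA _ ((AA k n).algebraMap_mem r)⟩
  | add f g hf hg =>
    obtain ⟨N, hN⟩ := hf
    obtain ⟨M', hM⟩ := hg
    refine ⟨N + M', ?_⟩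
    have : tX k i0 ^ (N + M') * (f + g)
        = tX k i0 ^ M' * (tX k i0 ^ N * f) + tX k i0 ^ N * (tX k i0 ^ M' * g) := by ring
    rw [this]
    exact add_mem (mul_mem (pow_mem (hA _ (hX _)) _) hN) (mul_mem (pow_mem (hA _ (hX _)) _) hM)
  | mul_X f v hf =>
    obtain ⟨N, hN⟩ := hf
    refine ⟨N + 1, ?_⟩
    have : tX k i0 ^ (N + 1) * (f * X v) = (tX k i0 ^ N * f) * (tX k i0 * X v) := by ring
    rw [this]
    refine mul_mem hN ?_
    rcases hv : ofLex v with i | i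
    · obtain rfl : v = Sum.inlₗ i := hv
      change tX k i0 * tY k i ∈ _
      by_cases hi : i = i0
      · subst hi; exact mul_mem (hA _ (hX _)) hY
      · have : tX k i0 * tY k i = br (tX k) (tY k) (i0.succ, i.succ) + tX k i * tY k i0 := by
          simp [br]; ring
        rw [this]
        refine add_mem (hA _ (br_mem _ ?_)) (mul_mem (hA _ (hX _)) hY)
        simpa using lt_of_le_of_ne (h0 i) (Ne.symm hi)
    · obtain rfl : v = Sum.inrₗ i := hv
      exact hA _ (mul_mem (hX _) (hX i))

theorem fft {k : Type} [Field k] [CharZero k] {n : ℕ} (i0 : Fin n) (h0 : ∀ i, i0 ≤ i)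
    (f : TT k n) (hf : DD k n f = 0) : f ∈ AA k n := by
  obtain ⟨N, p, hp⟩ := loc_aux i0 h0 f
  have h1 := DD_aeval (tY k i0) p
  change Polynomial.aeval (tY k i0) p = _ at hp
  rw [hp, Derivation.leibniz, Derivation.leibniz_pow, hf, DD_X] at h1
  simp only [smul_zero, add_zero] at h1
  rw [DD_Y, eq_comm, mul_eq_zero] at h1
  have h2 := trans_aux i0 _ (h1.resolve_right (by simp [tX]))
  have h3 := Polynomial.derivative_eq_zero.1 h2
  rw [Polynomial.eq_C_of_natDegree_eq_zero h3, Polynomial.aeval_C] at hp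
  have h4 : tX k i0 ^ N * f ∈ AA k n := by rw [← hp]; exact (p.coeff 0).2
  clear hp h2 h3 h1
  induction N with
  | zero => simpa using h4
  | succ N ih => exact ih (AA_div i0 h0 _ (by rwa [← mul_assoc, ← pow_succ']))

end FFT

section Side

/-- first coordinates in `S` -/
noncomputable def sx : Fin (d+d) → S K d :=
  Fin.append (fun i => v K d (i,0)) (fun i => u K d (i,0))
/-- second coordinates in `S` -/
noncomputable def sy : Fin (d+d) → S K d :=
  Fin.append (fun i => v K d (i,1)) (fun i => u K d (i,1))

/-- comparison map -/
noncomputable def Phi : TT K (d+d) →ₐ[K] S K d :=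
  aeval (fun q => Sum.elim (sy K d) (sx K d) (ofLex q))

theorem Phi_X (i : Fin (d+d)) : Phi K d (tX K i) = sx K d i := by
  simp [Phi, tX, Sum.inrₗ]
theorem Phi_Y (i : Fin (d+d)) : Phi K d (tY K i) = sy K d i := by
  simp [Phi, tY, Sum.inlₗ]

/-- images of the `u` variables -/
noncomputable def tU (j : ι d) : TT K (d+d) :=
  if j.2 = 0 then tX K (Fin.natAdd d j.1) else tY K (Fin.natAdd d j.1)
/-- images of the `v` variables -/
noncomputable def tV (j : ι d) : TT K (d+d) :=
  if j.2 = 0 then tX K (Fin.castAdd d j.1) else tY K (Fin.castAdd d j.1)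

/-- inverse of the comparison map -/
noncomputable def Psi : S K d →ₐ[K] TT K (d+d) :=
  aeval (Sum.elim (tU K d) (fun j => tV K d j + tU K d j))

theorem Phi_tU (j : ι d) : Phi K d (tU K d j) = u K d j := by
  obtain ⟨i, c⟩ := j
  fin_cases c <;> simp [-Fin.natAdd_eq_addNat, tU, Phi_X, Phi_Y, sx, sy]
theorem Phi_tV (j : ι d) : Phi K d (tV K d j) = v K d j := by
  obtain ⟨i, c⟩ := j
  fin_cases c <;> simp [tV, Phi_X, Phi_Y, sx, sy]
theorem Psi_u (j : ι d) : Psi K d (u K d j) = tU K d j := by simp [Psi, u]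
theorem Psi_v (j : ι d) : Psi K d (v K d j) = tV K d j := by simp [Psi, v]

theorem Phi_Psi (f : S K d) : Phi K d (Psi K d f) = f := by
  have : (Phi K d).comp (Psi K d) = AlgHom.id K _ := by
    apply MvPolynomial.algHom_ext
    rintro (j | j)
    · simp only [AlgHom.comp_apply]
      rw [← u, Psi_u, Phi_tU]; rfl
    · have : (X (Sum.inr j) : S K d) = v K d j + u K d j := by simp [u, v]
      simp only [AlgHom.comp_apply, this, map_add, Psi_u, Psi_v, Phi_tU, Phi_tV]; rfl
  exact DFunLike.congr_fun this f

theorem Psi_sx (i : Fin (d+d)) : Psi K d (sx K d i) = tX K i := by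
  refine Fin.addCases (fun i => ?_) (fun i => ?_) i <;> simp [-Fin.natAdd_eq_addNat, sx, Psi_u, Psi_v, tU, tV]
theorem Psi_sy (i : Fin (d+d)) : Psi K d (sy K d i) = tY K i := by
  refine Fin.addCases (fun i => ?_) (fun i => ?_) i <;> simp [-Fin.natAdd_eq_addNat, sy, Psi_u, Psi_v, tU, tV]

theorem Psi_Phi (f : TT K (d+d)) : Psi K d (Phi K d f) = f := by
  have : (Psi K d).comp (Phi K d) = AlgHom.id K _ := by
    apply MvPolynomial.algHom_ext
    intro q
    rcases hq : ofLex q with i | i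
    · obtain rfl : q = Sum.inlₗ i := hq
      change Psi K d (Phi K d (tY K i)) = tY K i
      rw [Phi_Y, Psi_sy]
    · obtain rfl : q = Sum.inrₗ i := hq
      change Psi K d (Phi K d (tX K i)) = tX K i
      rw [Phi_X, Psi_sx]
  exact DFunLike.congr_fun this f

/-- hypotheses on the derivation -/
structure HD (δS : Derivation K (S K d) (S K d)) : Prop where
  u0 : ∀ i : Fin d, δS (u K d (i, 0)) = 0
  u1 : ∀ i : Fin d, δS (u K d (i, 1)) = u K d (i, 0)
  v0 : ∀ i : Fin d, δS (v K d (i, 0)) = 0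
  v1 : ∀ i : Fin d, δS (v K d (i, 1)) = v K d (i, 0)

variable {K d}

theorem HD.comm {δS : Derivation K (S K d) (S K d)} (h : HD K d δS) (g : TT K (d+d)) :
    δS (Phi K d g) = Phi K d (DD K (d+d) g) := by
  have hx : ∀ i, δS (sx K d i) = 0 := by
    intro i
    refine Fin.addCases (fun i => ?_) (fun i => ?_) i <;> simp [-Fin.natAdd_eq_addNat, sx, h.u0, h.v0]
  have hy : ∀ i, δS (sy K d i) = sx K d i := by
    intro i
    refine Fin.addCases (fun i => ?_) (fun i => ?_) i <;> simp [-Fin.natAdd_eq_addNat, sx, sy, h.u1, h.v1]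
  induction g using MvPolynomial.induction_on with
  | C r =>
    rw [← MvPolynomial.algebraMap_eq, AlgHom.commutes]
    simp
  | add p q hp hq => simp only [map_add, hp, hq]
  | mul_X p q hp =>
    have : δS (Phi K d (X q)) = Phi K d (DD K (d+d) (X q)) := by
      rcases hq : ofLex q with i | i
      · obtain rfl : q = Sum.inlₗ i := hq
        change δS (Phi K d (tY K i)) = Phi K d (DD K (d+d) (tY K i))
        rw [DD_Y, Phi_X, Phi_Y, hy]
      · obtain rfl : q = Sum.inrₗ i := hq
        change δS (Phi K d (tX K i)) = Phi K d (DD K (d+d) (tX K i))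
        rw [DD_X, Phi_X, hx, map_zero]
    simp only [map_mul, Derivation.leibniz, hp, this, map_add, smul_eq_mul]

theorem Phi_br (p) : Phi K d (br (tX K) (tY K) p) = br (sx K d) (sy K d) p := by
  have := br_map (Phi K d : TT K (d+d) →+* S K d) (tX K) (tY K) p
  simpa [Phi_X, Phi_Y] using this

theorem Phi_mu (s) : Phi K d (mu (tX K) (tY K) s) = mu (sx K d) (sy K d) s := by
  have := mu_map (Phi K d : TT K (d+d) →+* S K d) (tX K) (tY K) s
  simpa [Phi_X, Phi_Y] using this

theorem HD.mu_mem {δS : Derivation K (S K d) (S K d)} (h : HD K d δS) (s) :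
    mu (sx K d) (sy K d) s ∈ Sδ K d δS := by
  refine Subalgebra.multiset_prod_mem _ ?_
  intro f hf
  obtain ⟨p, hp, rfl⟩ := Multiset.mem_map.1 hf
  change δS _ = 0
  rw [← Phi_br, h.comm, DD_br, map_zero]

theorem HD.span {δS : Derivation K (S K d) (S K d)} [CharZero K] (hd : 1 ≤ d) (h : HD K d δS)
    (f : S K d) (hf : f ∈ Sδ K d δS) :
    f ∈ Submodule.span K (mu (sx K d) (sy K d) '' {s | Good s}) := by
  have h1 : DD K (d+d) (Psi K d f) = 0 := by
    have h2 := h.comm (Psi K d f)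
    rw [Phi_Psi] at h2
    have h3 : δS f = 0 := hf
    rw [h3] at h2
    have := congrArg (Psi K d) h2
    rw [Psi_Phi, map_zero] at this
    exact this.symm
  have h2 := AA_span_good _ (fft (n := d+d) ⟨0, by omega⟩ (fun i => by simp [Fin.le_def]) _ h1)
  have h3 := Submodule.mem_map_of_mem (f := (Phi K d).toLinearMap) h2
  rw [Submodule.map_span] at h3
  rw [AlgHom.toLinearMap_apply, Phi_Psi] at h3
  refine Submodule.span_mono ?_ h3
  rintro _ ⟨_, ⟨s, hs, rfl⟩, rfl⟩
  exact ⟨s, hs, by rw [AlgHom.toLinearMap_apply, Phi_mu]⟩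

theorem indepS (c : Multiset (Fin (d+d+1) × Fin (d+d+1)) →₀ K)
    (hc : ∀ s ∈ c.support, Good s ∧ Std s)
    (h0 : Finsupp.linearCombination K (mu (sx K d) (sy K d)) c = 0) : c = 0 := by
  refine indep (br (tX K) (tY K)) c ?_ ?_
  · intro s hs
    exact ⟨(hc s hs).1, (hc s hs).2, fun p hp => deg_br _ p ((hc s hs).1 p hp)
      (fun _ => Or.inl rfl) (fun _ _ => rfl)⟩
  · have := congrArg (Psi K d) h0
    rw [Finsupp.linearCombination_apply, Finsupp.sum, map_sum, map_zero] at this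
    rw [Finsupp.sum, ← this]
    refine Finset.sum_congr rfl fun s _ => ?_
    rw [map_smul, ← Phi_mu, Psi_Phi]; rfl

end Side

section LPart

variable {K d}

/-- index of `v_i` -/
def vI (i : Fin d) : Fin (d+d+1) := (Fin.castAdd d i).succ
/-- index of `u_i` -/
def uI (i : Fin d) : Fin (d+d+1) := (Fin.natAdd d i).succ

theorem idx_cases (j : Fin (d+d+1)) : j = 0 ∨ (∃ i, j = vI i) ∨ (∃ i, j = uI i) := by
  refine Fin.cases (Or.inl rfl) (fun j => Or.inr ?_) j
  refine Fin.addCases (fun i => Or.inl ⟨i, rfl⟩) (fun i => Or.inr ⟨i, rfl⟩) j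

theorem vI_val (i : Fin d) : (vI i : ℕ) = i + 1 := by simp [vI]
theorem uI_val (i : Fin d) : (uI i : ℕ) = d + i + 1 := by
  simp [uI, -Fin.natAdd_eq_addNat]

/-- vector valued bracket -/
noncomputable def EV (p : Fin (d+d+1) × Fin (d+d+1)) : M K d :=
  (Fin.cons 0 (sx K d) : Fin (d+d+1) → S K d) p.1 •
    (Fin.cons 0 (Fin.append (fun i => a K d (i,1)) (fun _ => 0)) : Fin (d+d+1) → M K d) p.2 -
  (Fin.cons (-1) (sy K d) : Fin (d+d+1) → S K d) p.1 •
    (Fin.cons 0 (Fin.append (fun i => a K d (i,0)) (fun _ => 0)) : Fin (d+d+1) → M K d) p.2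

theorem EV_0v (i : Fin d) : EV (0, vI i) = a K d (i,0) := by
  simp [EV, vI]
theorem EV_vv (i j : Fin d) : EV (vI i, vI j) = - w K d j i := by
  simp [EV, vI, sx, sy, w]
theorem br_0v (i : Fin d) : br (sx K d) (sy K d) (0, vI i) = v K d (i,0) := by
  simp [br, vI, sx]
theorem br_0u (i : Fin d) : br (sx K d) (sy K d) (0, uI i) = u K d (i,0) := by
  simp [br, uI, sx, -Fin.natAdd_eq_addNat]
theorem br_vv (i j : Fin d) : br (sx K d) (sy K d) (vI i, vI j) = β K d i j := by
  simp [br, vI, sx, sy, β]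
theorem br_vu (i j : Fin d) : br (sx K d) (sy K d) (vI i, uI j) = - γ K d j i := by
  simp [br, vI, uI, sx, sy, γ, -Fin.natAdd_eq_addNat]; ring

/-- The module `L`. -/
noncomputable abbrev LL (δS : Derivation K (S K d) (S K d)) : Submodule (Sδ K d δS) (M K d) :=
  Submodule.span ↥(Sδ K d δS) (genL K d)

variable {δS : Derivation K (S K d) (S K d)}

theorem LL_smul (f : S K d) (hf : f ∈ Sδ K d δS) (m : M K d) (hm : m ∈ LL δS) :
    f • m ∈ LL δS := (LL δS).smul_mem ⟨f, hf⟩ hm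

theorem HD.v_mem (h : HD K d δS) (i : Fin d) : v K d (i,0) ∈ Sδ K d δS := h.v0 i
theorem HD.u_mem (h : HD K d δS) (i : Fin d) : u K d (i,0) ∈ Sδ K d δS := h.u0 i
theorem HD.β_mem (h : HD K d δS) (i j : Fin d) : β K d i j ∈ Sδ K d δS := by
  change δS _ = 0
  simp only [β, map_sub, Derivation.leibniz, h.v0, h.v1, smul_eq_mul]; ring
theorem HD.γ_mem (h : HD K d δS) (i j : Fin d) : γ K d i j ∈ Sδ K d δS := by
  change δS _ = 0
  simp only [γ, map_sub, Derivation.leibniz, h.v0, h.v1, h.u0, h.u1, smul_eq_mul]; ring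

theorem L1 (i : Fin d) : w K d i i ∈ LL δS :=
  Submodule.subset_span (by simp only [genL, Set.mem_union, Set.mem_setOf_eq]; grind)
theorem L2' (i j : Fin d) (h : i < j) : w K d i j + w K d j i ∈ LL δS :=
  Submodule.subset_span (Or.inl <| Or.inl <| Or.inl <| Or.inl <| Or.inl <| Or.inl <| Or.inr
    ⟨i, j, h, rfl⟩)
theorem L3' (i j : Fin d) (h : i < j) :
    v K d (j, 0) • a K d (i, 0) - v K d (i, 0) • a K d (j, 0) ∈ LL δS :=
  Submodule.subset_span (Or.inl <| Or.inl <| Or.inl <| Or.inl <| Or.inl <| Or.inr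
    ⟨i, j, h, rfl⟩)
theorem L4 (i p q : Fin d) (h : p < q) :
    β K d p q • a K d (i, 0) - v K d (i, 0) • w K d p q ∈ LL δS :=
  Submodule.subset_span (Or.inl <| Or.inl <| Or.inl <| Or.inl <| Or.inr
    ⟨i, p, q, h, rfl⟩)
theorem L5 (i j p q : Fin d) (h : i < j) (h' : p < q) :
    β K d p q • w K d i j - β K d i j • w K d p q ∈ LL δS :=
  Submodule.subset_span (Or.inl <| Or.inl <| Or.inl <| Or.inr
    ⟨i, j, p, q, h, h', rfl⟩)
theorem L6 (i j k : Fin d) (h : i < j) (h' : j < k) :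
    β K d j k • a K d (i, 0) - β K d i k • a K d (j, 0) + β K d i j • a K d (k, 0) ∈ LL δS :=
  Submodule.subset_span (Or.inl <| Or.inl <| Or.inr ⟨i, j, k, h, h', rfl⟩)
theorem L7 (i j k l : Fin d) (h : j < k) (h' : k < l) :
    γ K d i j • w K d k l - γ K d i k • w K d j l + γ K d i l • w K d j k ∈ LL δS :=
  Submodule.subset_span (Or.inl <| Or.inr ⟨i, j, k, l, h, h', rfl⟩)
theorem L8 (i j k : Fin d) (h : j < k) :
    u K d (i, 0) • w K d j k - γ K d i k • a K d (j, 0) + γ K d i j • a K d (k, 0) ∈ LL δS :=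
  Submodule.subset_span (Or.inr ⟨i, j, k, h, rfl⟩)

theorem L2 (i j : Fin d) : w K d i j + w K d j i ∈ LL δS := by
  rcases lt_trichotomy i j with h | rfl | h
  · exact L2' i j h
  · exact add_mem (L1 i) (L1 i)
  · rw [add_comm]; exact L2' j i h
theorem L3 (i j : Fin d) :
    v K d (j, 0) • a K d (i, 0) - v K d (i, 0) • a K d (j, 0) ∈ LL δS := by
  rcases lt_trichotomy i j with h | rfl | h
  · exact L3' i j h
  · simp
  · rw [← neg_sub]; exact neg_mem (L3' j i h)

/-- pairs supported on `e, v_1, …, v_d` -/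
def Om (p : Fin (d+d+1) × Fin (d+d+1)) : Prop := (p.2 : ℕ) ≤ d

theorem Om_cases (p : Fin (d+d+1) × Fin (d+d+1)) (hp : p.1 < p.2) (ho : Om p) :
    (∃ i : Fin d, p = (0, vI i)) ∨ (∃ i j : Fin d, i < j ∧ p = (vI i, vI j)) := by
  obtain ⟨b, c⟩ := p
  simp only [Om, Fin.lt_def] at hp ho
  rcases idx_cases c with rfl | ⟨i, rfl⟩ | ⟨i, rfl⟩
  · simp at hp
  · rcases idx_cases b with rfl | ⟨j, rfl⟩ | ⟨j, rfl⟩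
    · exact Or.inl ⟨i, rfl⟩
    · refine Or.inr ⟨j, i, ?_, rfl⟩
      simp only [vI_val] at hp; simp only [Fin.lt_def]; omega
    · simp only [vI_val, uI_val] at hp; omega
  · simp only [uI_val] at ho; omega

theorem koszul (h : HD K d δS) (p q : Fin (d+d+1) × Fin (d+d+1)) (hp : p.1 < p.2) (hq : q.1 < q.2)
    (op : Om p) (oq : Om q) :
    br (sx K d) (sy K d) p • EV q - br (sx K d) (sy K d) q • EV p ∈ LL δS := by
  have key : ∀ i r s : Fin d, r < s →
      v K d (i,0) • w K d s r + β K d r s • a K d (i,0) ∈ LL δS := by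
    intro i r s hrs
    have e : v K d (i,0) • w K d s r + β K d r s • a K d (i,0)
      = v K d (i,0) • (w K d r s + w K d s r) +
        (β K d r s • a K d (i, 0) - v K d (i, 0) • w K d r s) := by module
    rw [e]
    exact add_mem (LL_smul _ (h.v_mem _) _ (L2 _ _)) (L4 _ _ _ hrs)
  rcases Om_cases p hp op with ⟨i, rfl⟩ | ⟨i, j, hij, rfl⟩ <;>
    rcases Om_cases q hq oq with ⟨r, rfl⟩ | ⟨r, s, hrs, rfl⟩ <;>
    simp only [EV_0v, EV_vv, br_0v, br_vv]
  · exact L3 _ _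
  · have := neg_mem (key i r s hrs)
    convert this using 1; module
  · have := key r i j hij
    convert this using 1; module
  · have e : β K d i j • -w K d s r - β K d r s • -w K d j i
        = - (β K d i j • (w K d r s + w K d s r)) + β K d r s • (w K d i j + w K d j i)
          + (β K d i j • w K d r s - β K d r s • w K d i j) := by module
    rw [e]
    exact add_mem (add_mem (neg_mem (LL_smul _ (h.β_mem _ _) _ (L2 _ _)))
      (LL_smul _ (h.β_mem _ _) _ (L2 _ _))) (L5 _ _ _ _ hrs hij)

theorem w_plucker (i j k l : Fin d) :
    β K d i l • w K d j k = β K d i k • w K d j l + β K d k l • w K d j i := by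
  simp only [β, w]; module

theorem pluckerL (h : HD K d δS) (p q r s : Fin (d+d+1)) (hpq : p < q) (hqr : q < r) (hrs : r < s)
    (ho : (r : ℕ) ≤ d) :
    br (sx K d) (sy K d) (p,s) • EV (q,r) - br (sx K d) (sy K d) (q,s) • EV (p,r)
      + br (sx K d) (sy K d) (r,s) • EV (p,q) ∈ LL δS := by
  simp only [Fin.lt_def] at hpq hqr hrs
  obtain ⟨j, rfl⟩ : ∃ j, q = vI j := by
    rcases idx_cases q with rfl | h | ⟨i, rfl⟩
    · simp at hpq
    · exact h
    · simp only [uI_val] at hqr; omega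
  obtain ⟨k, rfl⟩ : ∃ j, r = vI j := by
    rcases idx_cases r with rfl | h | ⟨i, rfl⟩
    · simp at hqr
    · exact h
    · simp only [uI_val] at ho; omega
  have hjk : j < k := by simp only [vI_val] at hqr; simp only [Fin.lt_def]; omega
  rcases idx_cases p with rfl | ⟨i, rfl⟩ | ⟨i, rfl⟩
  · rcases idx_cases s with rfl | ⟨l, rfl⟩ | ⟨l, rfl⟩
    · simp at hrs
    · have hkl : k < l := by simp only [vI_val] at hrs; simp only [Fin.lt_def]; omega
      simp only [EV_0v, EV_vv, br_0v, br_vv]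
      have e : v K d (l,0) • -w K d k j - β K d j l • a K d (k,0) + β K d k l • a K d (j,0)
        = - (v K d (l,0) • (w K d j k + w K d k j))
          - (β K d j k • a K d (l, 0) - v K d (l, 0) • w K d j k) +
          (β K d k l • a K d (j, 0) - β K d j l • a K d (k, 0) + β K d j k • a K d (l, 0)) := by
        module
      rw [e]
      exact add_mem (sub_mem (neg_mem (LL_smul _ (h.v_mem _) _ (L2 _ _))) (L4 _ _ _ hjk))
        (L6 _ _ _ hjk hkl)
    · simp only [EV_0v, EV_vv, br_0u, br_vu]
      have e : u K d (l,0) • -w K d k j - -γ K d l j • a K d (k,0) + -γ K d l k • a K d (j,0)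
        = - (u K d (l,0) • (w K d j k + w K d k j))
          + (u K d (l, 0) • w K d j k - γ K d l k • a K d (j, 0) + γ K d l j • a K d (k, 0)) := by
        module
      rw [e]
      exact add_mem (neg_mem (LL_smul _ (h.u_mem _) _ (L2 _ _))) (L8 _ _ _ hjk)
  · have hij : i < j := by simp only [vI_val] at hpq; simp only [Fin.lt_def]; omega
    rcases idx_cases s with rfl | ⟨l, rfl⟩ | ⟨l, rfl⟩
    · simp at hrs
    · have hkl : k < l := by simp only [vI_val] at hrs; simp only [Fin.lt_def]; omega
      simp only [EV_vv, br_vv]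
      have e : β K d i l • -w K d k j - β K d j l • -w K d k i + β K d k l • -w K d j i
        = - (β K d i l • (w K d j k + w K d k j)) + β K d j l • (w K d i k + w K d k i)
          + (β K d i k • w K d j l - β K d j l • w K d i k) := by
        have := w_plucker (K := K) i j k l
        rw [smul_add, this]
        module
      rw [e]
      exact add_mem (add_mem (neg_mem (LL_smul _ (h.β_mem _ _) _ (L2 _ _)))
        (LL_smul _ (h.β_mem _ _) _ (L2 _ _))) (L5 _ _ _ _ (hjk.trans hkl) (hij.trans hjk))
    · simp only [EV_vv, br_vu]
      have e : -γ K d l i • -w K d k j - -γ K d l j • -w K d k i + -γ K d l k • -w K d j i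
        = γ K d l i • (w K d j k + w K d k j) - γ K d l j • (w K d i k + w K d k i)
          + γ K d l k • (w K d i j + w K d j i)
          - (γ K d l i • w K d j k - γ K d l j • w K d i k + γ K d l k • w K d i j) := by
        module
      rw [e]
      exact sub_mem (add_mem (sub_mem (LL_smul _ (h.γ_mem _ _) _ (L2 _ _))
        (LL_smul _ (h.γ_mem _ _) _ (L2 _ _))) (LL_smul _ (h.γ_mem _ _) _ (L2 _ _)))
        (L7 _ _ _ _ hij hjk)
  · simp only [vI_val, uI_val] at hpq hqr ho; omega

end LPart

section CPart

variable {K d}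

/-- The map `a_j ↦ v_j`. -/
noncomputable def ph : M K d →ₗ[S K d] S K d := Fintype.linearCombination (S K d) (v K d)

theorem ph_a (j : ι d) : ph (a K d j) = v K d j := by
  simp [ph, a, Fintype.linearCombination_apply_single]

theorem ph_w (p q : Fin d) : ph (w K d p q) = β K d p q := by
  simp only [w, map_sub, map_smul, ph_a, smul_eq_mul, β]; ring

variable {δS : Derivation K (S K d) (S K d)}

theorem ph_L (m : M K d) (hm : m ∈ LL δS) : ph m = 0 := by
  induction hm using Submodule.span_induction with
  | mem x hx =>
    simp only [genL] at hx
    rcases hx with ((((((⟨i, rfl⟩ | ⟨i, j, h, rfl⟩) | ⟨i, j, h, rfl⟩) | ⟨i, p, q, h, rfl⟩) |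
      ⟨i, j, p, q, h, h', rfl⟩) | ⟨i, j, k, h, h', rfl⟩) | ⟨i, j, k, l, h, h', rfl⟩) |
      ⟨i, j, k, h, rfl⟩ <;>
    simp only [map_sub, map_add, map_smul, ph_a, ph_w, smul_eq_mul, β, γ] <;> ring
  | zero => simp
  | add x y _ _ hx hy => rw [map_add, hx, hy, add_zero]
  | smul f x _ hx =>
    change ph ((f : S K d) • x) = 0
    rw [map_smul, hx, smul_zero]

theorem ph_EV (p : Fin (d+d+1) × Fin (d+d+1)) (hp : p.1 < p.2) (ho : Om p) :
    ph (EV p : M K d) = br (sx K d) (sy K d) p := by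
  rcases Om_cases p hp ho with ⟨i, rfl⟩ | ⟨i, j, hij, rfl⟩
  · rw [EV_0v, ph_a, br_0v]
  · rw [EV_vv, map_neg, ph_w, br_vv]; simp only [β]; ring

/-- `L` as a `K`-space. -/
noncomputable def LK (δS : Derivation K (S K d) (S K d)) : Submodule K (M K d) :=
  (LL δS).restrictScalars K

/-- the quotient -/
noncomputable abbrev VV (δS : Derivation K (S K d) (S K d)) : Type := M K d ⧸ LK δS

noncomputable def qk (δS : Derivation K (S K d) (S K d)) : M K d →ₗ[K] VV δS := (LK δS).mkQ

theorem qk_zero {m : M K d} : qk δS m = 0 ↔ m ∈ LL δS := by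
  rw [qk, Submodule.mkQ_apply, Submodule.Quotient.mk_eq_zero]; rfl

noncomputable def phb (δS : Derivation K (S K d) (S K d)) : VV δS →ₗ[K] S K d :=
  (LK δS).liftQ (ph.restrictScalars K) (fun m hm => ph_L m hm)

theorem phb_qk (m : M K d) : phb δS (qk δS m) = ph m := rfl

open Classical in
/-- monomials in the quotient -/
noncomputable def EE (δS : Derivation K (S K d) (S K d))
    (s : Multiset (Fin (d+d+1) × Fin (d+d+1))) : VV δS :=
  if h : ∃ g, g ∈ s ∧ Om g then
    qk δS (mu (sx K d) (sy K d) (s.erase h.choose) • EV h.choose) else 0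

theorem EE_cons (h : HD K d δS) (g : Fin (d+d+1) × Fin (d+d+1))
    (t : Multiset (Fin (d+d+1) × Fin (d+d+1))) (hg : Good (g ::ₘ t)) (ho : Om g) :
    EE δS (g ::ₘ t) = qk δS (mu (sx K d) (sy K d) t • EV g) := by
  classical
  have hex : ∃ g', g' ∈ g ::ₘ t ∧ Om g' := ⟨g, Multiset.mem_cons_self _ _, ho⟩
  rw [EE, dif_pos hex]
  obtain ⟨hm, ho'⟩ := hex.choose_spec
  generalize hex.choose = g' at hm ho' ⊢
  by_cases e : g' = g
  · subst e; simp
  · have hm' : g' ∈ t := (Multiset.mem_cons.1 hm).resolve_left e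
    obtain ⟨t', rfl⟩ := Multiset.exists_cons_of_mem hm'
    have : (g ::ₘ g' ::ₘ t').erase g' = g ::ₘ t' := by
      rw [Multiset.cons_swap, Multiset.erase_cons_head]
    rw [Multiset.erase_cons_tail _ (Ne.symm e), Multiset.erase_cons_head, ← sub_eq_zero, ← map_sub, qk_zero, mu_cons, mu_cons]
    have := LL_smul _ (h.mu_mem t') _ (koszul h g g' (hg _ (by simp)) (hg _ (by simp)) ho ho')
    convert this using 1
    module

theorem phb_EE (h : HD K d δS) (s : Multiset (Fin (d+d+1) × Fin (d+d+1))) (hg : Good s)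
    (hs : ∃ g ∈ s, Om g) : phb δS (EE δS s) = mu (sx K d) (sy K d) s := by
  obtain ⟨g, hgs, ho⟩ := hs
  obtain ⟨t, rfl⟩ := Multiset.exists_cons_of_mem hgs
  rw [EE_cons h g t hg ho, phb_qk, map_smul, ph_EV g (hg _ (by simp)) ho, mu_cons, smul_eq_mul,
    mul_comm]

/-- span of standard monomials -/
noncomputable def XX (δS : Derivation K (S K d) (S K d)) : Submodule K (VV δS) :=
  Submodule.span K (EE δS '' {s | Good s ∧ Std s ∧ ∃ g ∈ s, Om g})

theorem EE_mem (h : HD K d δS) (s : Multiset (Fin (d+d+1) × Fin (d+d+1))) (hg : Good s)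
    (hs : ∃ g ∈ s, Om g) : EE δS s ∈ XX δS := by
  have good : ∀ (a b c e : Fin (d+d+1)) (t : Multiset (Fin (d+d+1) × Fin (d+d+1))),
      a < c → c < e → e < b → Good ((a,b) ::ₘ (c,e) ::ₘ t) →
      Good ((a,e) ::ₘ (c,b) ::ₘ t) ∧ Good ((a,c) ::ₘ (e,b) ::ₘ t) := by
    intro a b c e t h1 h2 h3 hG
    constructor
    · intro p hp
      simp only [Multiset.mem_cons] at hp
      rcases hp with rfl | rfl | hp
      · exact h1.trans h2
      · exact h2.trans h3
      · exact hG p (by simp [hp])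
    · intro p hp
      simp only [Multiset.mem_cons] at hp
      rcases hp with rfl | rfl | hp
      · exact h1
      · exact h3
      · exact hG p (by simp [hp])
  refine straighten (k := K) (EE δS) (fun s => Good s ∧ ∃ g ∈ s, Om g) ?_ ?_ (XX δS) ?_ s hg
    ⟨hg, hs⟩
  · rintro a b c e t h1 h2 h3 ⟨hG, g, hgs, ho⟩
    refine ⟨⟨(good a b c e t h1 h2 h3 hG).1, ?_⟩, ⟨(good a b c e t h1 h2 h3 hG).2, ?_⟩⟩
    · simp only [Multiset.mem_cons] at hgs
      rcases hgs with rfl | rfl | hgs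
      · exact ⟨(a,e), by simp, by simp only [Om, Fin.lt_def] at *; omega⟩
      · exact ⟨(a,e), by simp, by simp only [Om, Fin.lt_def] at *; omega⟩
      · exact ⟨g, by simp [hgs], ho⟩
    · simp only [Multiset.mem_cons] at hgs
      rcases hgs with rfl | rfl | hgs
      · exact ⟨(a,c), by simp, by simp only [Om, Fin.lt_def] at *; omega⟩
      · exact ⟨(a,c), by simp, by simp only [Om, Fin.lt_def] at *; omega⟩
      · exact ⟨g, by simp [hgs], ho⟩
  · rintro a b c e t h1 h2 h3 ⟨hG, g, hgs, ho⟩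
    obtain ⟨g1, g2⟩ := good a b c e t h1 h2 h3 hG
    have main : (e : ℕ) ≤ d → EE δS ((a,b) ::ₘ (c,e) ::ₘ t)
        = EE δS ((a,e) ::ₘ (c,b) ::ₘ t) - EE δS ((a,c) ::ₘ (e,b) ::ₘ t) := by
      intro he
      have hG' := hG
      rw [Multiset.cons_swap] at hG' ⊢
      rw [EE_cons h (c,e) _ hG' he, EE_cons h (a,e) _ g1 he,
        EE_cons h (a,c) _ g2 (by simp only [Om, Fin.lt_def] at *; omega), ← map_sub, ← sub_eq_zero,
        ← map_sub, qk_zero, mu_cons, mu_cons, mu_cons]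
      have := LL_smul _ (h.mu_mem t) _ (pluckerL h a c e b h1 h2 h3 he)
      convert this using 1
      module
    simp only [Multiset.mem_cons] at hgs
    rcases hgs with rfl | rfl | hgs
    · exact main (by simp only [Om, Fin.lt_def] at *; omega)
    · exact main ho
    · obtain ⟨t', rfl⟩ := Multiset.exists_cons_of_mem hgs
      have sw : ∀ p q : Fin (d+d+1) × Fin (d+d+1),
          p ::ₘ q ::ₘ g ::ₘ t' = g ::ₘ p ::ₘ q ::ₘ t' := by
        intro p q
        rw [Multiset.cons_swap q g, Multiset.cons_swap p g]
      rw [sw] at hG g1 g2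
      rw [sw, sw, sw, EE_cons h g _ hG ho, EE_cons h g _ g1 ho, EE_cons h g _ g2 ho, ← map_sub,
        ← sub_smul]
      simp only [mu_cons, ← mul_assoc]
      rw [br_plucker, sub_mul]
  · intro s h1 h2 h3
    exact Submodule.subset_span ⟨s, ⟨h1, h2, h3.2⟩, rfl⟩

theorem qk_EV_mem [CharZero K] (hd : 1 ≤ d) (h : HD K d δS) (f : S K d) (hf : f ∈ Sδ K d δS)
    (p : Fin (d+d+1) × Fin (d+d+1)) (hp : p.1 < p.2) (ho : Om p) :
    qk δS (f • EV p) ∈ XX δS := by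
  have := HD.span hd h f hf
  induction this using Submodule.span_induction with
  | mem x hx =>
    obtain ⟨s, hs, rfl⟩ := hx
    have hg : Good (p ::ₘ s) := by
      intro q hq
      rcases Multiset.mem_cons.1 hq with rfl | hq
      · exact hp
      · exact hs q hq
    rw [← EE_cons h p s hg ho]
    exact EE_mem h _ hg ⟨p, by simp, ho⟩
  | zero => simp
  | add x y hx' hy' hx hy =>
    have key : ∀ z ∈ Submodule.span K (mu (sx K d) (sy K d) '' {s | Good s}), z ∈ Sδ K d δS := by
      intro z hz
      have hle : Submodule.span K (mu (sx K d) (sy K d) '' {s | Good s})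
        ≤ Subalgebra.toSubmodule (Sδ K d δS) := by
        rw [Submodule.span_le]
        rintro _ ⟨s, _, rfl⟩
        exact h.mu_mem s
      exact hle hz
    rw [add_smul, map_add]
    exact add_mem (hx (key _ hx')) (hy (key _ hy'))
  | smul c x hx' hx =>
    have key : ∀ z ∈ Submodule.span K (mu (sx K d) (sy K d) '' {s | Good s}), z ∈ Sδ K d δS := by
      intro z hz
      have hle : Submodule.span K (mu (sx K d) (sy K d) '' {s | Good s})
        ≤ Subalgebra.toSubmodule (Sδ K d δS) := by
        rw [Submodule.span_le]
        rintro _ ⟨s, _, rfl⟩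
        exact h.mu_mem s
      exact hle hz
    rw [smul_assoc, map_smul]
    exact Submodule.smul_mem _ _ (hx (key _ hx'))

theorem qk_C_mem [CharZero K] (hd : 1 ≤ d) (h : HD K d δS) (m : M K d)
    (hm : m ∈ Submodule.span ↥(Sδ K d δS) (genC K d)) :
    ∀ f ∈ Sδ K d δS, qk δS (f • m) ∈ XX δS := by
  induction hm using Submodule.span_induction with
  | mem x hx =>
    intro f hf
    rcases hx with ⟨i, rfl⟩ | ⟨p, q, rfl⟩
    · simp only
      rw [← EV_0v]
      refine qk_EV_mem hd h f hf _ ?_ ?_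
      · exact Fin.succ_pos _
      · simp only [Om, vI_val]; omega
    · have key : ∀ i j : Fin d, i < j → qk δS (f • EV (vI i, vI j)) ∈ XX δS := by
        intro i j hij
        refine qk_EV_mem hd h f hf _ ?_ ?_
        · simp only [Fin.lt_def, vI_val] at hij ⊢; omega
        · simp only [Om, vI_val]; omega
      rcases lt_trichotomy p q with hpq | rfl | hpq
      · have e : f • w K d p q = f • (w K d p q + w K d q p) + f • EV (vI p, vI q) := by
          rw [EV_vv]; module
        rw [e, map_add, qk_zero.2 (LL_smul _ hf _ (L2 _ _)), zero_add]
        exact key _ _ hpq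
      · rw [qk_zero.2 (LL_smul _ hf _ (L1 _))]; exact zero_mem _
      · have e : f • w K d p q = - (f • EV (vI q, vI p)) := by
          rw [EV_vv]; module
        rw [e, map_neg]
        exact neg_mem (key _ _ hpq)
  | zero => intro f _; simp
  | add x y _ _ hx hy =>
    intro f hf
    rw [smul_add, map_add]; exact add_mem (hx f hf) (hy f hf)
  | smul g x _ hx =>
    intro f hf
    change qk δS (f • ((g : S K d) • x)) ∈ _
    rw [smul_smul]
    exact hx _ (mul_mem hf g.2)

theorem ker_sub_L [CharZero K] (hd : 1 ≤ d) (h : HD K d δS) (m : M K d)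
    (hm : m ∈ Submodule.span ↥(Sδ K d δS) (genC K d)) (h0 : ph m = 0) : m ∈ LL δS := by
  have h1 := qk_C_mem hd h m hm 1 (one_mem _)
  rw [one_smul, XX, Finsupp.mem_span_image_iff_linearCombination] at h1
  obtain ⟨c, hc, hcm⟩ := h1
  have hsup : ∀ s ∈ c.support, Good s ∧ Std s ∧ ∃ g ∈ s, Om g := fun s hs => hc hs
  have h2 : Finsupp.linearCombination K (mu (sx K d) (sy K d)) c = 0 := by
    have : phb δS (Finsupp.linearCombination K (EE δS) c) = 0 := by
      rw [hcm, phb_qk, h0]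
    rw [Finsupp.linearCombination_apply, Finsupp.sum, map_sum] at this
    rw [Finsupp.linearCombination_apply, Finsupp.sum, ← this]
    refine Finset.sum_congr rfl fun s hs => ?_
    rw [map_smul, phb_EE h s (hsup s hs).1 (hsup s hs).2.2]
  have h3 := indepS c (fun s hs => ⟨(hsup s hs).1, (hsup s hs).2.1⟩) h2
  rw [h3, map_zero] at hcm
  exact qk_zero.1 hcm.symm

end CPart

section EPart

variable {K d}

theorem fst_op_smul (r : R K d) (m : M K d) : r • m = lam K d r • m := rfl
theorem op_smul' (r : R K d) (m : M K d) : MulOpposite.op r • m = rho K d r • m := rfl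

theorem ε_ι (j : ι d) : ε K d (FreeAlgebra.ι K j) =
    TrivSqZeroExt.inl (MvPolynomial.X j) + TrivSqZeroExt.inr (a K d j) := by
  simp [ε]

theorem ph_ε (p : P K d) : ph (ε K d p).snd = rho K d (ε K d p).fst - lam K d (ε K d p).fst := by
  induction p using FreeAlgebra.induction with
  | grade0 c =>
    rw [AlgHom.commutes, TrivSqZeroExt.algebraMap_eq_inl']
    simp [MvPolynomial.algebraMap_eq, lam, rho]
  | grade1 j =>
    rw [ε_ι]
    simp [ph_a, lam, rho, v]
  | add x y hx hy => simp only [map_add, TrivSqZeroExt.snd_add, TrivSqZeroExt.fst_add, hx, hy]; ring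
  | mul x y hx hy =>
    simp only [map_mul, TrivSqZeroExt.snd_mul, TrivSqZeroExt.fst_mul, fst_op_smul, op_smul',
      map_add, map_smul, hx, hy, smul_eq_mul]
    ring

/-- The commutator elements form an `S`-submodule. -/
def InP (m : M K d) : Prop := ∃ p ∈ P' K d, ε K d p = TrivSqZeroExt.inr m

theorem InP.ph {m : M K d} (h : InP m) : ph m = 0 := by
  obtain ⟨p, _, hp⟩ := h
  have := ph_ε p
  rw [hp] at this
  simpa using this

theorem InP.add {m n : M K d} (h : InP m) (h' : InP n) : InP (m + n) := by
  obtain ⟨p, h1, hp⟩ := h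
  obtain ⟨q, h2, hq⟩ := h'
  exact ⟨p + q, (P' K d).add_mem h1 h2, by rw [map_add, hp, hq, TrivSqZeroExt.inr_add]⟩

theorem InP.zero : InP (0 : M K d) := ⟨0, (P' K d).zero_mem, by simp⟩

theorem InP.sm {m : M K d} (h : InP m) (f : S K d) : InP (f • m) := by
  induction f using MvPolynomial.induction_on generalizing m with
  | C c =>
    obtain ⟨p, h1, hp⟩ := h
    refine ⟨algebraMap K _ c * p, (P' K d).mul_mem_left _ _ h1, ?_⟩
    rw [map_mul, AlgHom.commutes, hp, TrivSqZeroExt.algebraMap_eq_inl', TrivSqZeroExt.inl_mul_inr,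
      fst_op_smul]
    simp [lam, MvPolynomial.algebraMap_eq]
  | add p q hp hq => rw [add_smul]; exact (hp h).add (hq h)
  | mul_X p j hp =>
    rw [mul_smul]
    refine hp ?_
    obtain ⟨p, h1, hp⟩ := h
    rcases j with j | j
    · refine ⟨FreeAlgebra.ι K j * p, (P' K d).mul_mem_left _ _ h1, ?_⟩
      rw [map_mul, hp, ε_ι, add_mul, TrivSqZeroExt.inl_mul_inr, TrivSqZeroExt.inr_mul_inr,
        fst_op_smul]
      simp [lam]
    · refine ⟨p * FreeAlgebra.ι K j, (P' K d).mul_mem_right _ _ h1, ?_⟩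
      rw [map_mul, hp, ε_ι, mul_add, TrivSqZeroExt.inr_mul_inl, TrivSqZeroExt.inr_mul_inr,
        op_smul']
      simp [rho]

theorem InP.sub {m n : M K d} (h : InP m) (h' : InP n) : InP (m - n) := by
  have := h.add (h'.sm (-1))
  rwa [neg_one_smul, ← sub_eq_add_neg] at this

/-- Koszul elements -/
noncomputable def kp (i j : ι d) : M K d := v K d j • a K d i - v K d i • a K d j

theorem InP.kp (i j : ι d) : InP (kp i j : M K d) := by
  refine ⟨FreeAlgebra.ι K i * FreeAlgebra.ι K j - FreeAlgebra.ι K j * FreeAlgebra.ι K i,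
    TwoSidedIdeal.subset_span ⟨_, _, rfl⟩, ?_⟩
  rw [map_sub, map_mul, map_mul, ε_ι, ε_ι]
  ext1
  · simp [mul_comm]
  · simp only [TrivSqZeroExt.snd_sub, TrivSqZeroExt.snd_mul, TrivSqZeroExt.fst_add,
      TrivSqZeroExt.snd_add, TrivSqZeroExt.fst_inl, TrivSqZeroExt.fst_inr, TrivSqZeroExt.snd_inl,
      TrivSqZeroExt.snd_inr, fst_op_smul, op_smul', add_zero, zero_add, Stmt9.kp, lam, rho, rename_X, v]
    module

theorem w_diag (i : Fin d) : w K d i i = kp (i,0) (i,1) := by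
  simp only [w, kp]

theorem w_sym (i j : Fin d) : w K d i j + w K d j i = kp (i,0) (j,1) + kp (j,0) (i,1) := by
  simp only [w, kp]; module

theorem genL_InP (m : M K d) (hm : m ∈ genL K d) : InP m := by
  rcases hm with ((((((⟨i, rfl⟩ | ⟨i, j, h, rfl⟩) | ⟨i, j, h, rfl⟩) | ⟨i, p, q, h, rfl⟩) |
      ⟨i, j, p, q, h, h', rfl⟩) | ⟨i, j, k, h, h', rfl⟩) | ⟨i, j, k, l, h, h', rfl⟩) |
      ⟨i, j, k, h, rfl⟩
  · rw [w_diag]; exact InP.kp _ _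
  · rw [w_sym]; exact (InP.kp _ _).add (InP.kp _ _)
  · exact InP.kp _ _
  · have e : β K d p q • a K d (i, 0) - v K d (i, 0) • w K d p q
        = v K d (q,1) • kp (i,0) (p,0) - v K d (q,0) • kp (i,0) (p,1) := by
      simp only [β, w, kp]; module
    rw [e]
    exact ((InP.kp _ _).sm _).sub ((InP.kp _ _).sm _)
  · have e : β K d p q • w K d i j - β K d i j • w K d p q
        = v K d (j,1) • (v K d (q,1) • kp (i,0) (p,0) - v K d (q,0) • kp (i,0) (p,1))
        - v K d (j,0) • (v K d (q,1) • kp (i,1) (p,0) - v K d (q,0) • kp (i,1) (p,1)) := by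
      simp only [β, w, kp]; module
    rw [e]
    exact ((((InP.kp _ _).sm _).sub ((InP.kp _ _).sm _)).sm _).sub
      ((((InP.kp _ _).sm _).sub ((InP.kp _ _).sm _)).sm _)
  · have e : β K d j k • a K d (i, 0) - β K d i k • a K d (j, 0) + β K d i j • a K d (k, 0)
        = v K d (k,1) • kp (i,0) (j,0) - v K d (j,1) • kp (i,0) (k,0)
          + v K d (i,1) • kp (j,0) (k,0) := by
      simp only [β, kp]; module
    rw [e]
    exact (((InP.kp _ _).sm _).sub ((InP.kp _ _).sm _)).add ((InP.kp _ _).sm _)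
  · have e : γ K d i j • w K d k l - γ K d i k • w K d j l + γ K d i l • w K d j k
        = u K d (i,0) • (v K d (l,1) • kp (k,0) (j,1) + v K d (l,0) • kp (j,1) (k,1))
        - u K d (i,1) • (v K d (l,1) • kp (k,0) (j,0) + v K d (l,0) • kp (j,0) (k,1)) := by
      simp only [γ, w, kp]; module
    rw [e]
    exact ((((InP.kp _ _).sm _).add ((InP.kp _ _).sm _)).sm _).sub
      ((((InP.kp _ _).sm _).add ((InP.kp _ _).sm _)).sm _)
  · have e : u K d (i, 0) • w K d j k - γ K d i k • a K d (j, 0) + γ K d i j • a K d (k, 0)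
        = u K d (i,0) • kp (k,0) (j,1) + u K d (i,1) • kp (j,0) (k,0) := by
      simp only [γ, w, kp]; module
    rw [e]
    exact ((InP.kp _ _).sm _).add ((InP.kp _ _).sm _)

variable {δS : Derivation K (S K d) (S K d)}

theorem LL_InP (m : M K d) (hm : m ∈ LL δS) : InP m := by
  induction hm using Submodule.span_induction with
  | mem x hx => exact genL_InP x hx
  | zero => exact InP.zero
  | add x y _ _ hx hy => exact hx.add hy
  | smul f x _ hx => exact hx.sm (f : S K d)

theorem LL_le_C (h : HD K d δS) : LL δS ≤ Submodule.span ↥(Sδ K d δS) (genC K d) := by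
  have ha : ∀ i, a K d (i,0) ∈ Submodule.span ↥(Sδ K d δS) (genC K d) := fun i =>
    Submodule.subset_span (Or.inl ⟨i, rfl⟩)
  have hw : ∀ i j, w K d i j ∈ Submodule.span ↥(Sδ K d δS) (genC K d) := fun i j =>
    Submodule.subset_span (Or.inr ⟨i, j, rfl⟩)
  have sm : ∀ f ∈ Sδ K d δS, ∀ m ∈ Submodule.span ↥(Sδ K d δS) (genC K d),
      f • m ∈ Submodule.span ↥(Sδ K d δS) (genC K d) := fun f hf m hm =>
    Submodule.smul_mem _ (⟨f, hf⟩ : Sδ K d δS) hm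
  rw [LL, Submodule.span_le]
  intro m hm
  change m ∈ Submodule.span ↥(Sδ K d δS) (genC K d)
  rcases hm with ((((((⟨i, rfl⟩ | ⟨i, j, _, rfl⟩) | ⟨i, j, _, rfl⟩) | ⟨i, p, q, _, rfl⟩) |
      ⟨i, j, p, q, _, _, rfl⟩) | ⟨i, j, k, _, _, rfl⟩) | ⟨i, j, k, l, _, _, rfl⟩) |
      ⟨i, j, k, _, rfl⟩
  · exact hw _ _
  · exact add_mem (hw _ _) (hw _ _)
  · exact sub_mem (sm _ (h.v_mem _) _ (ha _)) (sm _ (h.v_mem _) _ (ha _))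
  · exact sub_mem (sm _ (h.β_mem _ _) _ (ha _)) (sm _ (h.v_mem _) _ (hw _ _))
  · exact sub_mem (sm _ (h.β_mem _ _) _ (hw _ _)) (sm _ (h.β_mem _ _) _ (hw _ _))
  · exact add_mem (sub_mem (sm _ (h.β_mem _ _) _ (ha _)) (sm _ (h.β_mem _ _) _ (ha _)))
      (sm _ (h.β_mem _ _) _ (ha _))
  · exact add_mem (sub_mem (sm _ (h.γ_mem _ _) _ (hw _ _)) (sm _ (h.γ_mem _ _) _ (hw _ _)))
      (sm _ (h.γ_mem _ _) _ (hw _ _))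
  · exact add_mem (sub_mem (sm _ (h.u_mem _) _ (hw _ _)) (sm _ (h.γ_mem _ _) _ (ha _)))
      (sm _ (h.γ_mem _ _) _ (ha _))

end EPart


/-- `L` consists exactly of the elements `m` of `C` such that `(0, m) ∈ ε(P')`. -/
theorem stmt9 [CharZero K] (hd : 1 ≤ d)
    (δS : Derivation K (S K d) (S K d))
    (hSu0 : ∀ i : Fin d, δS (u K d (i, 0)) = 0)
    (hSu1 : ∀ i : Fin d, δS (u K d (i, 1)) = u K d (i, 0))
    (hSv0 : ∀ i : Fin d, δS (v K d (i, 0)) = 0)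
    (hSv1 : ∀ i : Fin d, δS (v K d (i, 1)) = v K d (i, 0)) :
    ∀ m : M K d,
      m ∈ Submodule.span ↥(Sδ K d δS) (genL K d) ↔
        (m ∈ Submodule.span ↥(Sδ K d δS) (genC K d) ∧
          ∃ p ∈ P' K d, ε K d p = TrivSqZeroExt.inr m) := by
  intro m
  have h : HD K d δS := ⟨hSu0, hSu1, hSv0, hSv1⟩
  constructor
  · intro hm
    exact ⟨LL_le_C h hm, LL_InP m hm⟩
  · rintro ⟨hC, hp⟩
    exact ker_sub_L hd h m hC (InP.ph hp)

end Stmt9
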